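/- Constant Wronskian identity: let ψ : ℝ → ℝ be a twice continuously differentiable solution of the mode-zero Jacobi equation (B·ψ')'(s) + B(s)·(|II|²(s) − 2)·ψ(s) = 0 with initial data ψ(0) = 1/(2·K) and ψ'(0) = 0, where |II|²(s) := 2·(B''(s)/B(s) − 1), and let u_*(s) := −a·sinh(2s)/B(s). Then for every s ∈ ℝ, B(s)·(ψ(s)·u_*'(s) − ψ'(s)·u_*(s)) = −a/K. -/

import Mathlib

namespace MoriCatenoid

/-- Profile function `B(s) = √(a·cosh(2s) − 1/2)` of the Mori family. -/
noncomputable def B (a s : ℝ) : ℝ := Real.sqrt (a * Real.cosh (2 * s) - 1 / 2)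

/-- Profile function `A(s) = √(a·cosh(2s) + 1/2)` of the Mori family. -/
noncomputable def A (a s : ℝ) : ℝ := Real.sqrt (a * Real.cosh (2 * s) + 1 / 2)

/-- The constant `K = √(a² − 1/4)`. -/
noncomputable def K (a : ℝ) : ℝ := Real.sqrt (a ^ 2 - 1 / 4)

/-- The angle function `φ(s) = K·∫₀ˢ dt/(A(t)²·B(t))`. -/
noncomputable def φ (a s : ℝ) : ℝ := K a * ∫ t in (0:ℝ)..s, 1 / ((A a t) ^ 2 * B a t)

/-- The mode-one Jacobi field `f_*(s) = d/ds (A(s)·cosh(φ(s)))`. -/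
noncomputable def fstar (a s : ℝ) : ℝ := deriv (fun t => A a t * Real.cosh (φ a t)) s

/-- Squared norm of the second fundamental form, `|II|²(s) = 2·(B''(s)/B(s) − 1)`. -/
noncomputable def IIsq (a s : ℝ) : ℝ := 2 * (deriv (deriv (B a)) s / B a s - 1)

/-- The mode-`k` potential `W_k(s) = |II|²(s) − 2 − k²/B(s)²`. -/
noncomputable def W (a : ℝ) (k : ℤ) (s : ℝ) : ℝ := IIsq a s - 2 - (k : ℝ) ^ 2 / (B a s) ^ 2

/-- Inverse hyperbolic cosine: `arcosh x = log (x + √(x² − 1))`. -/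
noncomputable def arcosh (x : ℝ) : ℝ := Real.log (x + Real.sqrt (x ^ 2 - 1))

/-- The axial boost field `u_*(s) = −a·sinh(2s)/B(s)`. -/
noncomputable def ustar (a s : ℝ) : ℝ := -a * Real.sinh (2 * s) / B a s

/-- The radial quadratic form of mode `k`:
`S_k(u) = ∫_{−s₀}^{s₀} (B·u'² − B·W_k·u²) − coth(r)·B(s₀)·(u(s₀)² + u(−s₀)²)`,
where `u'` is the derivative of `u` within `[−s₀, s₀]`. -/
noncomputable def Sk (a s₀ r : ℝ) (k : ℤ) (u : ℝ → ℝ) : ℝ :=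
  (∫ s in (-s₀)..s₀,
      (B a s * (derivWithin u (Set.Icc (-s₀) s₀) s) ^ 2 - B a s * W a k s * u s ^ 2))
    - Real.cosh r / Real.sinh r * B a s₀ * (u s₀ ^ 2 + u (-s₀) ^ 2)

lemma Bpos (a : ℝ) (ha : 1 / 2 < a) (s : ℝ) : 0 < B a s := by
  unfold B
  apply Real.sqrt_pos.mpr
  nlinarith [Real.one_le_cosh (2 * s)]

lemma Bsq (a : ℝ) (ha : 1 / 2 < a) (s : ℝ) : B a s ^ 2 = a * Real.cosh (2 * s) - 1 / 2 := by
  unfold B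
  apply Real.sq_sqrt
  nlinarith [Real.one_le_cosh (2 * s)]

lemma hsinh (s : ℝ) : HasDerivAt (fun t : ℝ => Real.sinh (2 * t)) (2 * Real.cosh (2 * s)) s := by
  have := ((hasDerivAt_id s).const_mul 2).sinh
  simpa [mul_comm] using this

lemma hcosh (s : ℝ) : HasDerivAt (fun t : ℝ => Real.cosh (2 * t)) (2 * Real.sinh (2 * s)) s := by
  have := ((hasDerivAt_id s).const_mul 2).cosh
  simpa [mul_comm] using this

lemma hB (a : ℝ) (ha : 1 / 2 < a) (s : ℝ) :
    HasDerivAt (B a) (a * Real.sinh (2 * s) / B a s) s := by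
  have h0 : a * Real.cosh (2 * s) - 1 / 2 ≠ 0 := by
    nlinarith [Real.one_le_cosh (2 * s)]
  have h := (((hcosh s).const_mul a).sub_const (1 / 2)).sqrt h0
  have hb := (Bpos a ha s).ne'
  refine h.congr_deriv ?_
  change _ / (2 * B a s) = _
  field_simp

lemma hB' (a : ℝ) (ha : 1 / 2 < a) (s : ℝ) :
    HasDerivAt (fun t => a * Real.sinh (2 * t) / B a t)
      (2 * a * Real.cosh (2 * s) / B a s - a ^ 2 * Real.sinh (2 * s) ^ 2 / B a s ^ 3) s := by
  have hb := (Bpos a ha s).ne'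
  refine (((hsinh s).const_mul a).div (hB a ha s) hb).congr_deriv ?_
  field_simp

lemma ddB (a : ℝ) (ha : 1 / 2 < a) (s : ℝ) : deriv (deriv (B a)) s =
    2 * a * Real.cosh (2 * s) / B a s - a ^ 2 * Real.sinh (2 * s) ^ 2 / B a s ^ 3 := by
  have : deriv (B a) = fun t => a * Real.sinh (2 * t) / B a t :=
    funext fun t => (hB a ha t).deriv
  rw [this]
  exact (hB' a ha s).deriv

lemma hU (a : ℝ) (ha : 1 / 2 < a) (s : ℝ) : HasDerivAt (ustar a)
    (-(2 * a * Real.cosh (2 * s) / B a s - a ^ 2 * Real.sinh (2 * s) ^ 2 / B a s ^ 3)) s := by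
  have h := (hB' a ha s).neg
  refine h.congr_of_eventuallyEq (Filter.Eventually.of_forall fun t => ?_)
  simp [ustar, neg_div]

lemma hBU (a : ℝ) (ha : 1 / 2 < a) (s : ℝ) : HasDerivAt
    (fun t => B a t * deriv (ustar a) t) (- (B a s * (IIsq a s - 2) * ustar a s)) s := by
  have hb := (Bpos a ha s).ne'
  have e : (fun t => B a t * deriv (ustar a) t) = fun t =>
      -(2 * a * Real.cosh (2 * t) - a ^ 2 * Real.sinh (2 * t) ^ 2 / B a t ^ 2) := by
    funext t
    have hb := (Bpos a ha t).ne'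
    rw [(hU a ha t).deriv]
    field_simp
  rw [e]
  have h := (((hcosh s).const_mul (2 * a)).sub
    ((((hsinh s).pow 2).const_mul (a ^ 2)).div ((hB a ha s).pow 2) (pow_ne_zero 2 hb))).neg
  refine h.congr_deriv ?_
  rw [IIsq, ddB a ha s, ustar]
  have hc : a * Real.cosh (2 * s) = B a s ^ 2 + 1 / 2 := by rw [Bsq a ha s]; ring
  have hc' : Real.cosh (2 * s) = (B a s ^ 2 + 1 / 2) / a := by
    rw [← hc]; field_simp
  rw [hc']
  have ha0 : a ≠ 0 := by linarith
  simp only [Pi.pow_apply]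
  field_simp
  ring

/-- Constant Wronskian identity: if `ψ` is a `C²` solution of the mode-zero
Jacobi equation `(B·ψ')' + B·(|II|² − 2)·ψ = 0` with `ψ(0) = 1/(2K)` and
`ψ'(0) = 0`, then for every `s`,
`B(s)·(ψ(s)·u_*'(s) − ψ'(s)·u_*(s)) = −a/K`. -/
theorem constant_wronskian (a : ℝ) (ha : 1 / 2 < a) (ψ : ℝ → ℝ)
    (hψ : ContDiff ℝ 2 ψ)
    (hode : ∀ s : ℝ, deriv (fun t => B a t * deriv ψ t) s
        + B a s * (IIsq a s - 2) * ψ s = 0)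
    (hψ0 : ψ 0 = 1 / (2 * K a)) (hψ0' : deriv ψ 0 = 0) (s : ℝ) :
    B a s * (ψ s * deriv (ustar a) s - deriv ψ s * ustar a s) = -a / K a := by
  have hd : Differentiable ℝ ψ := hψ.differentiable (by norm_num)
  have hd' : Differentiable ℝ (deriv ψ) :=
    (contDiff_succ_iff_deriv (n := 1).mp hψ).2.2.differentiable (by norm_num)
  have key : ∀ t, HasDerivAt (fun t => ψ t * (B a t * deriv (ustar a) t)
      - (B a t * deriv ψ t) * ustar a t) 0 t := by
    intro t
    have h1 : HasDerivAt (fun t => B a t * deriv ψ t) (-(B a t * (IIsq a t - 2) * ψ t)) t := by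
      have h := ((hB a ha t).differentiableAt.mul (hd' t)).hasDerivAt
      refine h.congr_deriv ?_
      have := hode t
      change deriv (fun t => B a t * deriv ψ t) t = _
      linarith
    have hu := (hU a ha t).differentiableAt.hasDerivAt
    refine (((hd t).hasDerivAt.mul (hBU a ha t)).sub (h1.mul hu)).congr_deriv ?_
    ring
  have hc := is_const_of_deriv_eq_zero (fun t => (key t).differentiableAt)
    (fun t => (key t).deriv) s 0
  have hb := (Bpos a ha 0).ne'
  have hK : K a ≠ 0 := (Real.sqrt_pos.mpr (by nlinarith)).ne'
  simp only [hψ0, hψ0', (hU a ha 0).deriv] at hc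
  calc _ = ψ s * (B a s * deriv (ustar a) s) - (B a s * deriv ψ s) * ustar a s := by ring
    _ = _ := by
      rw [hc]
      simp
      field_simp

end MoriCatenoid
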